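/- There is an absolute constant C > 0 such that the following holds. Let G be a d-regular simple graph on a finite vertex set V with |V| = n ≥ 2, let φ ∈ (0,1) and η ≥ 1 be reals, and suppose V is partitioned into nonempty clusters C_1, …, C_k such that φ_in(C_i) ≥ φ and |C_i| ≥ n/(η·k) for every i ∈ {1,…,k}. Let M := (1/2)·I + (1/(2d))·A be the lazy random walk matrix of G. Then for every integer t ≥ 10·(log n)/φ² and every vertex x ∈ V, ‖M^t 𝟙_x‖₂ ≤ C·√(η·k/n). -/

import Mathlib

open Finset

/-- `edgeCount G S T` is the number of edges of `G` with one endpoint in `S` and the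
other in `T` (for disjoint `S`, `T` this counts each such edge exactly once). -/
def edgeCount {V : Type} [Fintype V] [DecidableEq V] (G : SimpleGraph V)
    [DecidableRel G.Adj] (S T : Finset V) : ℕ :=
  ∑ x ∈ S, ∑ y ∈ T, if G.Adj x y then 1 else 0

/-!
The argument is Cheeger's inequality applied inside every cluster. Let `P = A / d`. For a function
on a cluster, cut at its median, the coarea formula turns the conductance bound on level sets into
a Poincaré inequality: the variance of `f` on the cluster is at most `φ⁻²` times its energy
`∑ P u v (f u - f v) ^ 2`. A lazy step lowers `‖p‖²` by at least a quarter of the energy of `p`.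
For a probability vector `p` the cluster variances add up to at least `‖p‖² - β`, where `1 / β`
bounds the cluster sizes from below, so the excess `‖p‖² - β` contracts by the factor
`1 - φ ^ 2 / 4` in each step. Once `t ≥ 4 log n / φ ^ 2` it is at most `1 / n ≤ β`.
-/

open scoped Function Matrix

section Preliminaries

variable {ι : Type*}

lemma exists_median {α : Type*} [LinearOrder α] [Nonempty α] (s : Finset ι) (f : ι → α) :
    ∃ c, 2 * #{i ∈ s | c < f i} ≤ #s ∧ 2 * #{i ∈ s | f i < c} ≤ #s := by
  obtain rfl | hs := s.eq_empty_or_nonempty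
  · exact ⟨Classical.arbitrary α, by simp⟩
  let T := {i ∈ s | 2 * #{j ∈ s | f j < f i} ≤ #s}
  have hT : T.Nonempty := by
    obtain ⟨i, hi, hmin⟩ := s.exists_min_image f hs
    have hempty : {j ∈ s | f j < f i} = ∅ := filter_false_of_mem fun j hj => (hmin j hj).not_gt
    exact ⟨i, mem_filter.2 ⟨hi, by simp [hempty]⟩⟩
  obtain ⟨i, hi, hmax⟩ := T.exists_max_image f hT
  refine ⟨f i, ?_, (mem_filter.1 hi).2⟩
  by_contra! hgt
  -- The least value above `f i` also has at most half of the points below it.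
  obtain ⟨j, hj, hmin⟩ := exists_min_image {j ∈ s | f i < f j} f (card_pos.1 (by omega))
  obtain ⟨hjs, hij⟩ := mem_filter.1 hj
  have hsub : {l ∈ s | f l < f j} ⊆ {l ∈ s | ¬ f i < f l} := fun l hl =>
    mem_filter.2 ⟨(mem_filter.1 hl).1, fun hil =>
      (hmin l (mem_filter.2 ⟨(mem_filter.1 hl).1, hil⟩)).not_gt (mem_filter.1 hl).2⟩
  have hle := card_le_card hsub
  have hsplit := card_filter_add_card_filter_not (s := s) (fun l => f i < f l)
  exact (hmax j (mem_filter.2 ⟨hjs, by omega⟩)).not_gt hij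

lemma sum_sq_sub_sq_sum_div_card_le (s : Finset ι) (f : ι → ℝ) (c : ℝ) :
    ∑ i ∈ s, f i ^ 2 - (∑ i ∈ s, f i) ^ 2 / #s ≤ ∑ i ∈ s, (f i - c) ^ 2 := by
  obtain rfl | hs := s.eq_empty_or_nonempty
  · simp
  have hcard : (#s : ℝ) ≠ 0 := by exact_mod_cast hs.card_ne_zero
  have hexpand : ∑ i ∈ s, (f i - c) ^ 2 =
      ∑ i ∈ s, f i ^ 2 - 2 * c * ∑ i ∈ s, f i + #s * c ^ 2 := by
    simp only [sub_sq, sum_add_distrib, sum_sub_distrib, sum_const, nsmul_eq_mul, mul_sum]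
    congr 2
    exact sum_congr rfl fun i _ => by ring
  have hsquare : ∑ i ∈ s, (f i - c) ^ 2 - (∑ i ∈ s, f i ^ 2 - (∑ i ∈ s, f i) ^ 2 / #s) =
      (∑ i ∈ s, f i - #s * c) ^ 2 / #s := by
    rw [hexpand]
    field_simp [hcard]
    ring
  exact sub_nonneg.1 (hsquare ▸ by positivity)

lemma posPart_sq_add_negPart_sq (a : ℝ) : a⁺ ^ 2 + a⁻ ^ 2 = a ^ 2 := by
  obtain h | h := le_total 0 a <;> simp [h]

lemma sq_posPart_sub_add_sq_negPart_sub_le (a b : ℝ) :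
    (a⁺ - b⁺) ^ 2 + (a⁻ - b⁻) ^ 2 ≤ (a - b) ^ 2 := by
  have ha : a⁺ * a⁻ = 0 := by obtain h | h := le_total 0 a <;> simp [h]
  have hb : b⁺ * b⁻ = 0 := by obtain h | h := le_total 0 b <;> simp [h]
  calc (a⁺ - b⁺) ^ 2 + (a⁻ - b⁻) ^ 2
      ≤ (a⁺ - b⁺) ^ 2 + (a⁻ - b⁻) ^ 2 + 2 * (a⁺ * b⁻ + b⁺ * a⁻) := by
        have := posPart_nonneg a; have := posPart_nonneg b
        have := negPart_nonneg a; have := negPart_nonneg b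
        exact le_add_of_nonneg_right (by positivity)
    _ = ((a⁺ - a⁻) - (b⁺ - b⁻)) ^ 2 := by linear_combination 2 * ha + 2 * hb
    _ = (a - b) ^ 2 := by rw [posPart_sub_negPart, posPart_sub_negPart]

lemma one_sub_pow_le_inv_of_log_le {a x : ℝ} {t : ℕ} (ha : a ≤ 1) (hx : 0 < x)
    (h : Real.log x ≤ a * t) : (1 - a) ^ t ≤ x⁻¹ := by
  calc (1 - a) ^ t ≤ Real.exp (-a) ^ t :=
        pow_le_pow_left₀ (sub_nonneg.2 ha) (Real.one_sub_le_exp_neg a) t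
    _ = Real.exp (-(a * t)) := by rw [← Real.exp_nat_mul]; ring_nf
    _ ≤ Real.exp (-Real.log x) := by gcongr
    _ = x⁻¹ := by rw [Real.exp_neg, Real.exp_log hx]

lemma mulVec_mem_stdSimplex {R : Type*} [Semiring R] [PartialOrder R] [IsOrderedRing R]
    [Fintype ι] [DecidableEq ι] {M : Matrix ι ι R} (hM : M ∈ Matrix.colStochastic R ι)
    {p : ι → R} (hp : p ∈ stdSimplex R ι) : M *ᵥ p ∈ stdSimplex R ι :=
  ⟨Matrix.nonneg_mulVec_of_mem_colStochastic hM hp.1,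
    (Matrix.sum_mulVec_of_mem_colStochastic hM).trans hp.2⟩

end Preliminaries

section Cheeger

variable {V : Type*} {P : Matrix V V ℝ} {φ : ℝ} {C : Finset V}

/-- The energy of `f` on `C` with respect to the edge weights `P`. The sum is over ordered pairs,
which makes it twice the usual Dirichlet form. -/
def dirichletEnergy (P : Matrix V V ℝ) (C : Finset V) (f : V → ℝ) : ℝ :=
  ∑ u ∈ C, ∑ v ∈ C, P u v * (f u - f v) ^ 2

lemma dirichletEnergy_posPart_add_negPart_le (hnonneg : ∀ u v, 0 ≤ P u v) (f : V → ℝ) (c : ℝ) :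
    dirichletEnergy P C (fun u => (f u - c)⁺) + dirichletEnergy P C (fun u => (f u - c)⁻) ≤
      dirichletEnergy P C f := by
  simp only [dirichletEnergy, ← sum_add_distrib, ← mul_add]
  gcongr with u _ v _
  · exact hnonneg u v
  · simpa only [sub_sub_sub_cancel_right] using
      sq_posPart_sub_add_sq_negPart_sub_le (f u - c) (f v - c)

variable [DecidableEq V]

/-- The cluster `C` has inner conductance at least `φ` with respect to the edge weights `P`, which
are thought of as normalized to have row sums `1`: for the walk on a `d`-regular graph, `P = A / d`
and the right-hand side is `|E(S, C ∖ S)| / d`. -/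
def IsInnerExpander (P : Matrix V V ℝ) (φ : ℝ) (C : Finset V) : Prop :=
  ∀ S ⊆ C, 2 * #S ≤ #C → φ * #S ≤ ∑ u ∈ S, ∑ v ∈ C \ S, P u v

/-- Indicators of intervals encode the level set `{f > t}`, so that the bound can be integrated
over `t`. -/
lemma IsInnerExpander.mul_sum_indicator_Ico_le (hC : IsInnerExpander P φ C) {f : V → ℝ}
    (hf : ∀ u ∈ C, 0 ≤ f u) (hsupp : 2 * #{u ∈ C | f u ≠ 0} ≤ #C) (t : ℝ) :
    φ * ∑ u ∈ C, (Set.Ico 0 (f u)).indicator 1 t ≤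
      ∑ u ∈ C, ∑ v ∈ C, P u v * (Set.Ico (f v) (f u)).indicator 1 t := by
  simp only [Set.indicator_apply, Set.mem_Ico, Pi.one_apply]
  obtain ht | ht := lt_or_ge t 0
  · have hout : ∀ u ∈ C, ¬ f u ≤ t := fun u hu => (ht.trans_le (hf u hu)).not_ge
    rw [sum_eq_zero fun u _ => by simp [ht.not_ge], mul_zero]
    exact (sum_eq_zero fun u _ => sum_eq_zero fun v hv => by simp [hout v hv]).ge
  let S := {u ∈ C | t < f u}
  have hS : 2 * #S ≤ #C := by
    refine le_trans (Nat.mul_le_mul_left 2 (card_le_card fun u hu => ?_)) hsupp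
    obtain ⟨huC, hu⟩ := mem_filter.1 hu
    exact mem_filter.2 ⟨huC, (ht.trans_lt hu).ne'⟩
  convert hC S (filter_subset _ _) hS using 1
  · simp [ht, S]
  · have hdiff : C \ S = {v ∈ C | f v ≤ t} := by
      ext v
      simp +contextual [S]
    simp only [hdiff, S, sum_filter]
    refine sum_congr rfl fun u _ => ?_
    split_ifs with hu <;> simp [hu]

open MeasureTheory in
/-- The coarea formula: both sides are the integrals over `t` of the two sides of
`mul_sum_indicator_Ico_le`. -/
lemma IsInnerExpander.mul_sum_le_sum_posPart_sub (hC : IsInnerExpander P φ C) {f : V → ℝ}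
    (hf : ∀ u ∈ C, 0 ≤ f u) (hsupp : 2 * #{u ∈ C | f u ≠ 0} ≤ #C) :
    φ * ∑ u ∈ C, f u ≤ ∑ u ∈ C, ∑ v ∈ C, P u v * (f u - f v)⁺ := by
  have hint (a b : ℝ) : Integrable ((Set.Ico a b).indicator (1 : ℝ → ℝ)) :=
    (integrable_indicator_iff measurableSet_Ico).2
      (integrableOn_const (by simp))
  have hlength (a b : ℝ) : ∫ t, (Set.Ico a b).indicator (1 : ℝ → ℝ) t = (b - a)⁺ := by
    rw [integral_indicator_one measurableSet_Ico, Real.volume_real_Ico, posPart_def]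
  have hmono := integral_mono
    ((integrable_finsetSum C fun u _ => hint 0 (f u)).const_mul φ)
    (integrable_finsetSum C fun u _ => integrable_finsetSum C
      fun v _ => (hint (f v) (f u)).const_mul (P u v))
    (hC.mul_sum_indicator_Ico_le hf hsupp)
  have hleft : ∫ t, φ * ∑ u ∈ C, (Set.Ico 0 (f u)).indicator (1 : ℝ → ℝ) t =
      φ * ∑ u ∈ C, f u := by
    rw [integral_const_mul, integral_finsetSum C fun u _ => hint 0 (f u)]
    congr 1
    exact sum_congr rfl fun u hu => by rw [hlength, sub_zero, posPart_of_nonneg (hf u hu)]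
  have hright : ∫ t, ∑ u ∈ C, ∑ v ∈ C, P u v * (Set.Ico (f v) (f u)).indicator (1 : ℝ → ℝ) t =
      ∑ u ∈ C, ∑ v ∈ C, P u v * (f u - f v)⁺ := by
    rw [integral_finsetSum C fun u _ => integrable_finsetSum C
      fun v _ => (hint (f v) (f u)).const_mul (P u v)]
    refine sum_congr rfl fun u _ => ?_
    rw [integral_finsetSum C fun v _ => (hint (f v) (f u)).const_mul (P u v)]
    exact sum_congr rfl fun v _ => by rw [integral_const_mul, hlength]
  rwa [hleft, hright] at hmono

lemma IsInnerExpander.two_mul_sum_le_sum_abs_sub (hC : IsInnerExpander P φ C) (hP : P.IsSymm)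
    {f : V → ℝ} (hf : ∀ u ∈ C, 0 ≤ f u) (hsupp : 2 * #{u ∈ C | f u ≠ 0} ≤ #C) :
    2 * (φ * ∑ u ∈ C, f u) ≤ ∑ u ∈ C, ∑ v ∈ C, P u v * |f u - f v| := by
  have hswap : ∑ u ∈ C, ∑ v ∈ C, P u v * (f u - f v)⁻ =
      ∑ u ∈ C, ∑ v ∈ C, P u v * (f u - f v)⁺ := by
    rw [sum_comm]
    refine sum_congr rfl fun u _ => sum_congr rfl fun v _ => ?_
    rw [hP.apply, ← posPart_neg, neg_sub]
  simp only [← posPart_add_negPart, mul_add, sum_add_distrib, hswap, ← two_mul]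
  gcongr
  exact hC.mul_sum_le_sum_posPart_sub hf hsupp

lemma IsInnerExpander.sq_mul_sum_sq_le_dirichletEnergy_of_card_support_le
    (hC : IsInnerExpander P φ C) (hP : P.IsSymm) (hnonneg : ∀ u v, 0 ≤ P u v)
    (hrow : ∀ u, ∑ v ∈ C, P u v ≤ 1) (hφ : 0 ≤ φ) {g : V → ℝ}
    (hsupp : 2 * #{u ∈ C | g u ≠ 0} ≤ #C) :
    φ ^ 2 * ∑ u ∈ C, g u ^ 2 ≤ dirichletEnergy P C g := by
  have hcoarea := hC.two_mul_sum_le_sum_abs_sub hP (f := fun u => g u ^ 2)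
    (fun u _ => sq_nonneg _) (by simpa using hsupp)
  have hrows : ∑ u ∈ C, ∑ v ∈ C, P u v * g u ^ 2 ≤ ∑ u ∈ C, g u ^ 2 := by
    refine sum_le_sum fun u _ => ?_
    rw [← sum_mul]
    exact mul_le_of_le_one_left (sq_nonneg _) (hrow u)
  have hcols : ∑ u ∈ C, ∑ v ∈ C, P u v * g v ^ 2 = ∑ u ∈ C, ∑ v ∈ C, P u v * g u ^ 2 := by
    rw [sum_comm]
    exact sum_congr rfl fun u _ => sum_congr rfl fun v _ => by rw [hP.apply]
  have hamgm (a b : ℝ) : φ * |a ^ 2 - b ^ 2| ≤ (a - b) ^ 2 + φ ^ 2 / 2 * (a ^ 2 + b ^ 2) := by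
    rw [sq_sub_sq, abs_mul, ← sq_abs (a - b)]
    nlinarith [sq_nonneg (|a - b| - φ / 2 * |a + b|), sq_abs (a + b),
      mul_nonneg (sq_nonneg φ) (sq_nonneg (a - b))]
  have hsum : φ * ∑ u ∈ C, ∑ v ∈ C, P u v * |g u ^ 2 - g v ^ 2| ≤
      dirichletEnergy P C g + φ ^ 2 * ∑ u ∈ C, ∑ v ∈ C, P u v * g u ^ 2 := by
    calc φ * ∑ u ∈ C, ∑ v ∈ C, P u v * |g u ^ 2 - g v ^ 2|
        = ∑ u ∈ C, ∑ v ∈ C, P u v * (φ * |g u ^ 2 - g v ^ 2|) := by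
          simp only [mul_sum, mul_left_comm]
      _ ≤ ∑ u ∈ C, ∑ v ∈ C, P u v * ((g u - g v) ^ 2 + φ ^ 2 / 2 * (g u ^ 2 + g v ^ 2)) := by
          gcongr with u _ v _
          exacts [hnonneg u v, hamgm _ _]
      _ = dirichletEnergy P C g + φ ^ 2 / 2 * (∑ u ∈ C, ∑ v ∈ C, P u v * g u ^ 2 +
            ∑ u ∈ C, ∑ v ∈ C, P u v * g v ^ 2) := by
          simp only [dirichletEnergy, mul_add, sum_add_distrib, mul_sum, mul_left_comm]
      _ = dirichletEnergy P C g + φ ^ 2 * ∑ u ∈ C, ∑ v ∈ C, P u v * g u ^ 2 := by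
          rw [hcols]
          ring
  nlinarith [mul_le_mul_of_nonneg_left hcoarea hφ,
    mul_le_mul_of_nonneg_left hrows (sq_nonneg φ)]

lemma IsInnerExpander.sq_mul_variance_le_dirichletEnergy (hC : IsInnerExpander P φ C)
    (hP : P.IsSymm) (hnonneg : ∀ u v, 0 ≤ P u v) (hrow : ∀ u, ∑ v ∈ C, P u v ≤ 1) (hφ : 0 ≤ φ)
    (f : V → ℝ) :
    φ ^ 2 * (∑ u ∈ C, f u ^ 2 - (∑ u ∈ C, f u) ^ 2 / #C) ≤ dirichletEnergy P C f := by
  obtain ⟨c, habove, hbelow⟩ := exists_median C f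
  have hpos := hC.sq_mul_sum_sq_le_dirichletEnergy_of_card_support_le hP hnonneg hrow hφ
    (g := fun u => (f u - c)⁺) (by simpa using habove)
  have hneg := hC.sq_mul_sum_sq_le_dirichletEnergy_of_card_support_le hP hnonneg hrow hφ
    (g := fun u => (f u - c)⁻) (by simpa using hbelow)
  calc φ ^ 2 * (∑ u ∈ C, f u ^ 2 - (∑ u ∈ C, f u) ^ 2 / #C)
      ≤ φ ^ 2 * ∑ u ∈ C, (f u - c) ^ 2 := by
        gcongr
        exact sum_sq_sub_sq_sum_div_card_le C f c
    _ = φ ^ 2 * ∑ u ∈ C, (f u - c)⁺ ^ 2 + φ ^ 2 * ∑ u ∈ C, (f u - c)⁻ ^ 2 := by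
        simp only [← posPart_sq_add_negPart_sq (_ - c), sum_add_distrib, mul_add]
    _ ≤ dirichletEnergy P C f :=
        (add_le_add hpos hneg).trans (dirichletEnergy_posPart_add_negPart_le hnonneg f c)

end Cheeger

section LazyWalk

variable {V : Type*} [Fintype V] [DecidableEq V] {P : Matrix V V ℝ}

/-- The lazy version `(1 + P) / 2` of a random walk with transition matrix `P`. -/
noncomputable def lazyWalk (P : Matrix V V ℝ) : Matrix V V ℝ :=
  (1 / 2 : ℝ) • (1 + P)

lemma lazyWalk_mem_doublyStochastic (hP : P ∈ doublyStochastic ℝ V) :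
    lazyWalk P ∈ doublyStochastic ℝ V := by
  rw [lazyWalk, smul_add]
  exact convex_doublyStochastic (one_mem _) hP (by norm_num) (by norm_num) (by norm_num)

lemma lazyWalk_mulVec_apply (hP : P ∈ Matrix.rowStochastic ℝ V) (p : V → ℝ) (u : V) :
    (lazyWalk P *ᵥ p) u = ∑ v, P u v * ((p u + p v) / 2) := by
  have hlazy : (lazyWalk P *ᵥ p) u = 1 / 2 * (p u + ∑ v, P u v * p v) := by
    rw [lazyWalk, Matrix.smul_mulVec, Matrix.add_mulVec, Matrix.one_mulVec]
    rfl
  have hmean : p u = ∑ v, P u v * p u := by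
    rw [← sum_mul, Matrix.sum_row_of_mem_rowStochastic hP, one_mul]
  rw [hlazy]
  conv_lhs => rw [hmean, ← sum_add_distrib, mul_sum]
  exact sum_congr rfl fun v _ => by ring

lemma sum_sq_lazyWalk_mulVec_le (hP : P ∈ doublyStochastic ℝ V) (p : V → ℝ) :
    ∑ u, (lazyWalk P *ᵥ p) u ^ 2 ≤ ∑ u, p u ^ 2 - 1 / 4 * dirichletEnergy P univ p := by
  have hrows : ∑ u, ∑ v, P u v * p u ^ 2 = ∑ u, p u ^ 2 := by
    simp only [← sum_mul, sum_row_of_mem_doublyStochastic hP, one_mul]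
  have hcols : ∑ u, ∑ v, P u v * p v ^ 2 = ∑ u, p u ^ 2 := by
    rw [sum_comm]
    simp only [← sum_mul, sum_col_of_mem_doublyStochastic hP, one_mul]
  have hrow := (mem_doublyStochastic_iff_mem_rowStochastic_and_mem_colStochastic.1 hP).1
  calc ∑ u, (lazyWalk P *ᵥ p) u ^ 2
      ≤ ∑ u, ∑ v, P u v * ((p u + p v) / 2) ^ 2 := by
        gcongr with u
        rw [lazyWalk_mulVec_apply hrow]
        exact Real.pow_arith_mean_le_arith_mean_pow_of_even _ _ _
          (fun v _ => nonneg_of_mem_doublyStochastic hP)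
          (sum_row_of_mem_doublyStochastic hP u) even_two
    _ = ∑ u, ∑ v, (1 / 2 * (P u v * p u ^ 2) + 1 / 2 * (P u v * p v ^ 2) -
          1 / 4 * (P u v * (p u - p v) ^ 2)) :=
        sum_congr rfl fun u _ => sum_congr rfl fun v _ => by ring
    _ = ∑ u, p u ^ 2 - 1 / 4 * dirichletEnergy P univ p := by
        simp only [dirichletEnergy, sum_sub_distrib, sum_add_distrib, ← mul_sum, hrows, hcols]
        ring

variable {ι : Type*} [Fintype ι] {C : ι → Finset V} {φ β : ℝ}

lemma sum_eq_sum_sum_of_partition (hdisj : Pairwise (Disjoint on C))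
    (hcover : univ.biUnion C = univ) (f : V → ℝ) : ∑ u, f u = ∑ i, ∑ u ∈ C i, f u := by
  rw [← hcover, sum_biUnion fun i _ j _ hij => hdisj hij]

lemma sum_dirichletEnergy_le_dirichletEnergy_univ (hnonneg : ∀ u v, 0 ≤ P u v)
    (hdisj : Pairwise (Disjoint on C)) (hcover : univ.biUnion C = univ) (f : V → ℝ) :
    ∑ i, dirichletEnergy P (C i) f ≤ dirichletEnergy P univ f := by
  simp only [dirichletEnergy]
  rw [sum_eq_sum_sum_of_partition hdisj hcover]
  gcongr with i _ u _
  · exact fun v _ _ => mul_nonneg (hnonneg u v) (sq_nonneg _)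
  · exact subset_univ _

lemma sum_sq_sum_div_card_le (hdisj : Pairwise (Disjoint on C))
    (hcover : univ.biUnion C = univ) (hsize : ∀ i, 1 ≤ β * #(C i)) {p : V → ℝ}
    (hp : p ∈ stdSimplex ℝ V) : ∑ i, (∑ u ∈ C i, p u) ^ 2 / #(C i) ≤ β := by
  have hmass (i : ι) : (∑ u ∈ C i, p u) ^ 2 / #(C i) ≤ β * ∑ u ∈ C i, p u := by
    have hnonneg : 0 ≤ ∑ u ∈ C i, p u := sum_nonneg fun u _ => hp.1 u
    have hle : ∑ u ∈ C i, p u ≤ 1 :=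
      (sum_le_univ_sum_of_nonneg hp.1).trans_eq hp.2
    have hcard : (0 : ℝ) < #(C i) := by
      refine (Nat.cast_nonneg _).lt_of_ne fun h => ?_
      simpa [← h] using (hsize i).trans_lt' zero_lt_one
    rw [div_le_iff₀ hcard]
    nlinarith [mul_le_mul_of_nonneg_left (hsize i) hnonneg]
  calc ∑ i, (∑ u ∈ C i, p u) ^ 2 / #(C i)
      ≤ ∑ i, β * ∑ u ∈ C i, p u := sum_le_sum fun i _ => hmass i
    _ = β := by rw [← mul_sum, ← sum_eq_sum_sum_of_partition hdisj hcover, hp.2, mul_one]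

lemma sum_sq_lazyWalk_mulVec_sub_le (hP : P ∈ doublyStochastic ℝ V) (hsymm : P.IsSymm)
    (hφ : 0 ≤ φ) (hdisj : Pairwise (Disjoint on C)) (hcover : univ.biUnion C = univ)
    (hC : ∀ i, IsInnerExpander P φ (C i)) (hsize : ∀ i, 1 ≤ β * #(C i)) {p : V → ℝ}
    (hp : p ∈ stdSimplex ℝ V) :
    ∑ u, (lazyWalk P *ᵥ p) u ^ 2 - β ≤ (1 - φ ^ 2 / 4) * (∑ u, p u ^ 2 - β) := by
  have hnonneg (u v : V) : 0 ≤ P u v := nonneg_of_mem_doublyStochastic hP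
  have hrow (i : ι) (u : V) : ∑ v ∈ C i, P u v ≤ 1 :=
    (sum_le_univ_sum_of_nonneg (hnonneg u)).trans_eq (sum_row_of_mem_doublyStochastic hP u)
  have henergy : φ ^ 2 * (∑ u, p u ^ 2 - β) ≤ dirichletEnergy P univ p := by
    calc φ ^ 2 * (∑ u, p u ^ 2 - β)
        ≤ φ ^ 2 * (∑ u, p u ^ 2 - ∑ i, (∑ u ∈ C i, p u) ^ 2 / #(C i)) := by
          gcongr
          exact sum_sq_sum_div_card_le hdisj hcover hsize hp
      _ = ∑ i, φ ^ 2 * (∑ u ∈ C i, p u ^ 2 - (∑ u ∈ C i, p u) ^ 2 / #(C i)) := by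
          rw [sum_eq_sum_sum_of_partition hdisj hcover, ← sum_sub_distrib, mul_sum]
      _ ≤ ∑ i, dirichletEnergy P (C i) p := sum_le_sum fun i _ =>
          (hC i).sq_mul_variance_le_dirichletEnergy hsymm hnonneg (hrow i) hφ p
      _ ≤ dirichletEnergy P univ p :=
          sum_dirichletEnergy_le_dirichletEnergy_univ hnonneg hdisj hcover p
  linarith [sum_sq_lazyWalk_mulVec_le hP p]

lemma sum_sq_lazyWalk_pow_mulVec_sub_le (hP : P ∈ doublyStochastic ℝ V) (hsymm : P.IsSymm)
    (hφ : φ ∈ Set.Icc 0 1) (hdisj : Pairwise (Disjoint on C))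
    (hcover : univ.biUnion C = univ) (hC : ∀ i, IsInnerExpander P φ (C i))
    (hsize : ∀ i, 1 ≤ β * #(C i)) {p : V → ℝ} (hp : p ∈ stdSimplex ℝ V) (t : ℕ) :
    ∑ u, ((lazyWalk P ^ t) *ᵥ p) u ^ 2 - β ≤ (1 - φ ^ 2 / 4) ^ t * (∑ u, p u ^ 2 - β) := by
  induction t with
  | zero => simp
  | succ t ih =>
    have hmem : (lazyWalk P ^ t) *ᵥ p ∈ stdSimplex ℝ V := mulVec_mem_stdSimplex
      (mem_doublyStochastic_iff_mem_rowStochastic_and_mem_colStochastic.1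
        (pow_mem (lazyWalk_mem_doublyStochastic hP) t)).2 hp
    have hfactor : 0 ≤ 1 - φ ^ 2 / 4 := by nlinarith [hφ.1, hφ.2]
    rw [pow_succ', ← Matrix.mulVec_mulVec, pow_succ', mul_assoc]
    exact (sum_sq_lazyWalk_mulVec_sub_le hP hsymm hφ.1 hdisj hcover hC hsize hmem).trans
      (mul_le_mul_of_nonneg_left ih hfactor)

lemma sum_sq_lazyWalk_pow_mulVec_single_le (hP : P ∈ doublyStochastic ℝ V) (hsymm : P.IsSymm)
    (hφ : φ ∈ Set.Icc 0 1) (hdisj : Pairwise (Disjoint on C))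
    (hcover : univ.biUnion C = univ) (hC : ∀ i, IsInnerExpander P φ (C i))
    (hsize : ∀ i, 1 ≤ β * #(C i)) {t : ℕ} (ht : 4 * Real.log (Fintype.card V) ≤ φ ^ 2 * t)
    (x : V) : ∑ y, ((lazyWalk P ^ t) *ᵥ Pi.single x 1) y ^ 2 ≤ 2 * β := by
  obtain ⟨i, -, -⟩ := mem_biUnion.1 (hcover.symm ▸ mem_univ x)
  have hn : (0 : ℝ) < Fintype.card V := Nat.cast_pos.2 (Fintype.card_pos_iff.2 ⟨x⟩)
  have hβ : 0 ≤ β := (pos_of_mul_pos_left (zero_lt_one.trans_le (hsize i)) (Nat.cast_nonneg _)).le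
  have hfactor : φ ^ 2 / 4 ≤ 1 := by nlinarith [hφ.1, hφ.2]
  have hstart : ∑ y, (Pi.single x 1 : V → ℝ) y ^ 2 = 1 := by simp [Pi.single_apply]
  have hexcess : ∑ y, ((lazyWalk P ^ t) *ᵥ Pi.single x 1) y ^ 2 - β ≤ β := by
    calc ∑ y, ((lazyWalk P ^ t) *ᵥ Pi.single x 1) y ^ 2 - β
        ≤ (1 - φ ^ 2 / 4) ^ t * (1 - β) := by
          refine (sum_sq_lazyWalk_pow_mulVec_sub_le hP hsymm hφ hdisj hcover hC hsize
            (single_mem_stdSimplex ℝ x) t).trans_eq ?_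
          rw [hstart]
      _ ≤ (1 - φ ^ 2 / 4) ^ t :=
          mul_le_of_le_one_right (pow_nonneg (sub_nonneg.2 hfactor) t) (by linarith)
      _ ≤ (Fintype.card V : ℝ)⁻¹ := one_sub_pow_le_inv_of_log_le hfactor hn (by linarith)
      _ ≤ β := by
          rw [inv_le_iff_one_le_mul₀ hn]
          exact (hsize i).trans (by gcongr; exact card_le_univ _)
  linarith

end LazyWalk

theorem stmt_3_general {V ι : Type*} [Fintype V] [DecidableEq V] [Fintype ι]
    {P : Matrix V V ℝ} (hP : P ∈ doublyStochastic ℝ V) (hsymm : P.IsSymm) {φ η : ℝ}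
    (hφ : φ ∈ Set.Ioc 0 1) (hη : 0 < η) {C : ι → Finset V}
    (hdisj : Pairwise (Disjoint on C)) (hcover : univ.biUnion C = univ)
    (hsize : ∀ i, (Fintype.card V : ℝ) / (η * Fintype.card ι) ≤ #(C i))
    (hC : ∀ i, IsInnerExpander P φ (C i)) {t : ℕ}
    (ht : 4 * Real.log (Fintype.card V) / φ ^ 2 ≤ t) (x : V) :
    √(∑ y, ((lazyWalk P ^ t) *ᵥ Pi.single x 1) y ^ 2) ≤
      √2 * √(η * Fintype.card ι / Fintype.card V) := by
  obtain ⟨i, -, -⟩ := mem_biUnion.1 (hcover.symm ▸ mem_univ x)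
  have hn : (0 : ℝ) < Fintype.card V := Nat.cast_pos.2 (Fintype.card_pos_iff.2 ⟨x⟩)
  have hk : (0 : ℝ) < Fintype.card ι := Nat.cast_pos.2 (Fintype.card_pos_iff.2 ⟨i⟩)
  rw [← Real.sqrt_mul zero_le_two]
  refine Real.sqrt_le_sqrt (sum_sq_lazyWalk_pow_mulVec_single_le hP hsymm ⟨hφ.1.le, hφ.2⟩ hdisj
    hcover hC (fun j => ?_) ?_ x)
  · rw [← inv_le_iff_one_le_mul₀' (by positivity), inv_div]
    exact hsize j
  · rwa [div_le_iff₀ (pow_pos hφ.1 2), mul_comm (t : ℝ)] at ht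

lemma lazyWalk_inv_smul_adjMatrix {V : Type*} [DecidableEq V] (G : SimpleGraph V)
    [DecidableRel G.Adj] (d : ℕ) :
    lazyWalk ((d : ℝ)⁻¹ • G.adjMatrix ℝ) =
      (1 / 2 : ℝ) • (1 : Matrix V V ℝ) + (1 / (2 * (d : ℝ))) • G.adjMatrix ℝ := by
  rw [lazyWalk, smul_add, smul_smul, ← one_div, ← one_div_mul_one_div]

lemma inv_smul_adjMatrix_mem_doublyStochastic {V : Type*} [Fintype V] [DecidableEq V]
    {G : SimpleGraph V} [DecidableRel G.Adj] {d : ℕ} (hG : G.IsRegularOfDegree d) (hd : d ≠ 0) :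
    (d : ℝ)⁻¹ • G.adjMatrix ℝ ∈ doublyStochastic ℝ V := by
  have hd' : (d : ℝ) ≠ 0 := Nat.cast_ne_zero.2 hd
  refine mem_doublyStochastic.2 ⟨fun u v => ?_, ?_, ?_⟩
  · rw [Matrix.smul_apply, G.adjMatrix_apply]
    positivity
  · ext u
    simp [Matrix.smul_mulVec, hG u, hd']
  · ext u
    simp [Matrix.vecMul_smul, hG u, hd']

lemma isInnerExpander_inv_smul_adjMatrix {V : Type} [Fintype V] [DecidableEq V]
    {G : SimpleGraph V} [DecidableRel G.Adj] {d : ℕ} (hd : 0 < d) {φ : ℝ} {C : Finset V}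
    (hC : ∀ S ⊆ C, 0 < #S → (#S : ℝ) ≤ (#C : ℝ) / 2 → φ * (d * #S) ≤ edgeCount G S (C \ S)) :
    IsInnerExpander ((d : ℝ)⁻¹ • G.adjMatrix ℝ) φ C := by
  intro S hSC hhalf
  obtain rfl | hS := S.eq_empty_or_nonempty
  · simp
  have hhalf' : (#S : ℝ) ≤ #C / 2 := by
    rw [le_div_iff₀' two_pos]
    exact_mod_cast hhalf
  have hcut : ∑ u ∈ S, ∑ v ∈ C \ S, ((d : ℝ)⁻¹ • G.adjMatrix ℝ) u v =
      (d : ℝ)⁻¹ * edgeCount G S (C \ S) := by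
    simp only [Matrix.smul_apply, smul_eq_mul, ← mul_sum, edgeCount, G.adjMatrix_apply,
      Nat.cast_sum, Nat.cast_ite, Nat.cast_one, Nat.cast_zero]
  rw [hcut, le_inv_mul_iff₀ (Nat.cast_pos.2 hd), mul_left_comm]
  exact hC S hSC hS.card_pos hhalf'

/-- In a `d`-regular graph partitioned into clusters of inner conductance
at least `φ` and size at least `n/(ηk)`, for `t ≥ 10 log n / φ²` the `t`-step distribution of
the lazy random walk `M = (1/2)I + (1/(2d))A` started at any vertex has Euclidean
norm at most `C √(ηk/n)`. -/
theorem stmt_3 :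
    ∃ C : ℝ, 0 < C ∧
    ∀ (V : Type) [Fintype V] [DecidableEq V] (G : SimpleGraph V) [DecidableRel G.Adj]
      (d k n : ℕ) (φ η : ℝ) (Cl : Fin k → Finset V),
      n = Fintype.card V → 2 ≤ n → 1 ≤ d →
      G.IsRegularOfDegree d →
      φ ∈ Set.Ioo (0:ℝ) 1 → 1 ≤ η →
      (∀ i, (Cl i).Nonempty) →
      (∀ i j, i ≠ j → Disjoint (Cl i) (Cl j)) →
      (Finset.univ.biUnion Cl = Finset.univ) →
      (∀ i, (n : ℝ) / (η * k) ≤ ((Cl i).card : ℝ)) →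
      (∀ i, ∀ S ⊆ Cl i, 0 < S.card → (S.card : ℝ) ≤ ((Cl i).card : ℝ) / 2 →
        φ * (d * S.card) ≤ (edgeCount G S (Cl i \ S) : ℝ)) →
      ∀ t : ℕ, 10 * Real.log n / φ ^ 2 ≤ (t : ℝ) →
      ∀ x : V,
        Real.sqrt (∑ y : V,
            (Matrix.mulVec
              (((1/2 : ℝ) • (1 : Matrix V V ℝ) + (1/(2 * (d:ℝ))) • G.adjMatrix ℝ) ^ t)
              (Pi.single x 1) y) ^ 2)
          ≤ C * Real.sqrt (η * k / n) := by
  refine ⟨√2, by positivity, ?_⟩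
  rintro V _ _ G _ d k n φ η Cl rfl - hd hreg hφ hη - hdisj hcover hsize hcond t ht x
  rw [← lazyWalk_inv_smul_adjMatrix]
  simpa using stmt_3_general (inv_smul_adjMatrix_mem_doublyStochastic hreg (by omega))
    (G.isSymm_adjMatrix.smul _) ⟨hφ.1, hφ.2.le⟩ (one_pos.trans_le hη) (fun i j => hdisj i j) hcover
    (by simpa using hsize) (fun i => isInnerExpander_inv_smul_adjMatrix hd (hcond i))
    (ht.trans' (by gcongr; norm_num)) x
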